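/- Characterization of definite provability: for every propositional defeasible theory T and literal q, T ⊢ +Δq if and only if M_Δ(q)=True for every defeasible model M of T. -/

import Mathlib

/-- A literal is an atom or its negation. -/
inductive Lit (Atom : Type) where
  | pos : Atom → Lit Atom
  | neg : Atom → Lit Atom
  deriving DecidableEq

/-- The complement `~q` of a literal `q`. -/
def Lit.compl {Atom : Type} : Lit Atom → Lit Atom
  | .pos a => .neg a
  | .neg a => .pos a

/-- The three kinds of rules: strict, defeasible, defeater. -/
inductive RuleKind where
  | strict
  | defeasible
  | defeater
  deriving DecidableEq

/-- A rule: a kind, a finite set of literals as body (antecedent), and a head literal. -/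
structure DRule (Atom : Type) where
  kind : RuleKind
  body : Finset (Lit Atom)
  head : Lit Atom
  deriving DecidableEq

/-- A rule is strict-or-defeasible (a "supportive" rule). -/
def DRule.isSd {Atom : Type} (r : DRule Atom) : Prop :=
  r.kind = RuleKind.strict ∨ r.kind = RuleKind.defeasible

/-- A propositional defeasible theory: finite set of facts, finite set of rules,
and a superiority relation on rules. -/
structure DTheory (Atom : Type) where
  facts : Finset (Lit Atom)
  rules : Finset (DRule Atom)
  sup : DRule Atom → DRule Atom → Prop

/-- Acyclicity of the superiority relation. -/
def SupAcyclic {Atom : Type} (T : DTheory Atom) : Prop :=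
  ∀ r : DRule Atom, ¬ Relation.TransGen T.sup r r

/-- Conclusions: tagged literals +Δq, -Δq, +∂q, -∂q. -/
inductive Concl (Atom : Type) where
  | plusDelta : Lit Atom → Concl Atom
  | minusDelta : Lit Atom → Concl Atom
  | plusPartial : Lit Atom → Concl Atom
  | minusPartial : Lit Atom → Concl Atom
  deriving DecidableEq

/-- The inference rules of DL: `Licensed T prev c` holds when the conclusion `c`
may be appended to a derivation whose preceding part is `prev`. -/
def Licensed {Atom : Type} (T : DTheory Atom)
    (prev : List (Concl Atom)) : Concl Atom → Prop
  | .plusDelta q =>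
      q ∈ T.facts ∨
      ∃ r ∈ T.rules, r.kind = RuleKind.strict ∧ r.head = q ∧
        ∀ a ∈ r.body, Concl.plusDelta a ∈ prev
  | .minusDelta q =>
      q ∉ T.facts ∧
      ∀ r ∈ T.rules, r.kind = RuleKind.strict → r.head = q →
        ∃ a ∈ r.body, Concl.minusDelta a ∈ prev
  | .plusPartial q =>
      (Concl.plusDelta q ∈ prev) ∨
      ((∃ r ∈ T.rules, r.isSd ∧ r.head = q ∧
          ∀ a ∈ r.body, Concl.plusPartial a ∈ prev) ∧
       (Concl.minusDelta q.compl ∈ prev) ∧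
       ∀ s ∈ T.rules, s.head = q.compl →
         ((∃ a ∈ s.body, Concl.minusPartial a ∈ prev) ∨
          (∃ t ∈ T.rules, t.isSd ∧ t.head = q ∧ T.sup t s ∧
            ∀ a ∈ t.body, Concl.plusPartial a ∈ prev)))
  | .minusPartial q =>
      (Concl.minusDelta q ∈ prev) ∧
      ((∀ r ∈ T.rules, r.isSd → r.head = q →
          ∃ a ∈ r.body, Concl.minusPartial a ∈ prev) ∨
       (Concl.plusDelta q.compl ∈ prev) ∨
       (∃ s ∈ T.rules, s.head = q.compl ∧
          (∀ a ∈ s.body, Concl.plusPartial a ∈ prev) ∧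
          ∀ t ∈ T.rules, t.isSd → t.head = q →
            ((∃ a ∈ t.body, Concl.minusPartial a ∈ prev) ∨ ¬ T.sup t s)))

/-- A derivation: each element of the sequence is licensed given the preceding part. -/
def DLDerivation {Atom : Type} (T : DTheory Atom)
    (P : List (Concl Atom)) : Prop :=
  ∀ i : Fin P.length, Licensed T (P.take i) (P.get i)

/-- `T ⊢ c`: some derivation in `T` ends with conclusion `c`. -/
def DLProves {Atom : Type} (T : DTheory Atom) (c : Concl Atom) : Prop :=
  ∃ P : List (Concl Atom), DLDerivation T P ∧ P.getLast? = some c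

/-- A defeasible interpretation: two partial functions from literals to booleans
(modelled as `Option Bool`-valued functions), `del` for definite knowledge (Δ) and
`par` for defeasible belief (∂). -/
structure DInterp (Atom : Type) where
  del : Lit Atom → Option Bool
  par : Lit Atom → Option Bool

/-- The coherence conditions on defeasible interpretations: what is known is believed,
and what is not believed is not known. -/
def DInterp.Coherent {Atom : Type} (I : DInterp Atom) : Prop :=
  (∀ q : Lit Atom, I.del q = some true → I.par q = some true) ∧
  (∀ q : Lit Atom, I.par q = some false → I.del q = some false)

open Classical in
/-- Kleene conjunction of a partial boolean function over a finite set of literals: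
`False` if some member maps to `False`, `True` if every member maps to `True`,
undefined otherwise. -/
noncomputable def kleeneAll {Atom : Type} (f : Lit Atom → Option Bool)
    (S : Finset (Lit Atom)) : Option Bool :=
  if ∃ a ∈ S, f a = some false then some false
  else if ∀ a ∈ S, f a = some true then some true
  else none

/-- The four model conditions (MΔ+), (MΔ-), (M∂+), (M∂-). -/
def ModelConditions {Atom : Type} (T : DTheory Atom)
    (I : DInterp Atom) : Prop :=
  (∀ q : Lit Atom,
    I.del q = some true ↔
      (q ∈ T.facts ∨
       ∃ r ∈ T.rules, r.kind = RuleKind.strict ∧ r.head = q ∧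
         kleeneAll I.del r.body = some true)) ∧
  (∀ q : Lit Atom,
    I.del q = some false ↔
      (q ∉ T.facts ∧
       ∀ r ∈ T.rules, r.kind = RuleKind.strict → r.head = q →
         kleeneAll I.del r.body = some false)) ∧
  (∀ q : Lit Atom,
    I.par q = some true ↔
      (I.del q = some true ∨
       ((∃ r ∈ T.rules, r.isSd ∧ r.head = q ∧ kleeneAll I.par r.body = some true) ∧
        I.del q.compl = some false ∧
        ∀ s ∈ T.rules, s.head = q.compl →
          (kleeneAll I.par s.body = some false ∨
           ∃ t ∈ T.rules, t.isSd ∧ t.head = q ∧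
             kleeneAll I.par t.body = some true ∧ T.sup t s)))) ∧
  (∀ q : Lit Atom,
    I.par q = some false ↔
      (I.del q = some false ∧
       ((∀ r ∈ T.rules, r.isSd → r.head = q → kleeneAll I.par r.body = some false) ∨
        I.del q.compl = some true ∨
        (∃ s ∈ T.rules, s.head = q.compl ∧ kleeneAll I.par s.body = some true ∧
          ∀ t ∈ T.rules, t.isSd → t.head = q →
            (kleeneAll I.par t.body = some false ∨ ¬ T.sup t s)))))

/-- A defeasible model of `T`: a defeasible interpretation (coherent pair of partial
functions) satisfying the four model conditions. -/
def IsModel {Atom : Type} (T : DTheory Atom) (I : DInterp Atom) : Prop :=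
  I.Coherent ∧ ModelConditions T I

/-- A conclusion holds in an interpretation. -/
def DLHolds {Atom : Type} (I : DInterp Atom) : Concl Atom → Prop
  | .plusDelta q => I.del q = some true
  | .minusDelta q => I.del q = some false
  | .plusPartial q => I.par q = some true
  | .minusPartial q => I.par q = some false



/-- Definite derivability as an inductive predicate. -/
inductive DefD {Atom : Type} (T : DTheory Atom) : Lit Atom → Prop where
  | fact (q : Lit Atom) (h : q ∈ T.facts) : DefD T q
  | rule (r : DRule Atom) (h : r ∈ T.rules) (hk : r.kind = RuleKind.strict)
      (hb : ∀ a ∈ r.body, DefD T a) : DefD T r.head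

theorem deriv_snoc {Atom : Type} {T : DTheory Atom} {P : List (Concl Atom)} {c : Concl Atom}
    (hP : DLDerivation T P) (hc : Licensed T P c) : DLDerivation T (P ++ [c]) := by
  rintro ⟨i, hi⟩
  simp only [List.length_append, List.length_singleton] at hi
  by_cases h : i < P.length
  · have := hP ⟨i, h⟩
    simp only [List.get_eq_getElem] at this ⊢
    rw [List.getElem_append_left h, List.take_append_of_le_length h.le]
    exact this
  · have h' : i = P.length := by omega
    subst h'
    simpa using hc

theorem DefD.derivable {Atom : Type} [DecidableEq Atom] {T : DTheory Atom} {q : Lit Atom}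
    (h : DefD T q) :
    ∀ P, DLDerivation T P → ∃ P', (∀ c ∈ P, c ∈ P') ∧
      DLDerivation T (P' ++ [Concl.plusDelta q]) := by
  induction h with
  | fact q h => exact fun P hP => ⟨P, fun _ h => h, deriv_snoc hP (Or.inl h)⟩
  | rule r h hk hb ih =>
    intro P hP
    have key : ∀ s : Finset (Lit Atom), s ⊆ r.body → ∃ P', (∀ c ∈ P, c ∈ P') ∧
        DLDerivation T P' ∧ ∀ a ∈ s, Concl.plusDelta a ∈ P' := by
      intro s
      induction s using Finset.induction_on with
      | empty => exact fun _ => ⟨P, fun _ h => h, hP, by simp⟩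
      | insert a s ha ihs =>
        intro hs
        obtain ⟨P1, h1, h2, h3⟩ := ihs (fun x hx => hs (Finset.mem_insert_of_mem hx))
        obtain ⟨P2, h4, h5⟩ := ih a (hs (Finset.mem_insert_self a s)) P1 h2
        refine ⟨_, fun c hc => List.mem_append_left _ (h4 _ (h1 c hc)), h5, ?_⟩
        intro b hb
        rcases Finset.mem_insert.1 hb with rfl | hb
        · simp
        · exact List.mem_append_left _ (h4 _ (h3 b hb))
    obtain ⟨P', h1, h2, h3⟩ := key r.body (Finset.Subset.refl _)
    exact ⟨P', h1, deriv_snoc h2 (Or.inr ⟨r, h, hk, rfl, h3⟩)⟩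

theorem deriv_sound {Atom : Type} {T : DTheory Atom} {P : List (Concl Atom)}
    (hP : DLDerivation T P) : ∀ i : ℕ, ∀ (hi : i < P.length) (q : Lit Atom),
      P[i] = Concl.plusDelta q → DefD T q := by
  intro i
  induction i using Nat.strong_induction_on with
  | _ i ih =>
    intro hi q hq
    have := hP ⟨i, hi⟩
    simp only [List.get_eq_getElem, hq] at this
    rcases this with h | ⟨r, hr, hk, rfl, hb⟩
    · exact .fact q h
    · refine .rule r hr hk fun a ha => ?_
      obtain ⟨j, hj, hja⟩ := List.getElem_of_mem (hb a ha)
      have hj' : j < i := by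
        simp only [List.length_take] at hj; omega
      rw [List.getElem_take] at hja
      exact ih j hj' (by omega) a hja

theorem proves_iff_defD {Atom : Type} [DecidableEq Atom] {T : DTheory Atom} {q : Lit Atom} :
    DLProves T (Concl.plusDelta q) ↔ DefD T q := by
  constructor
  · rintro ⟨P, hP, hl⟩
    obtain ⟨i, hi, h⟩ := List.getElem_of_mem (List.mem_of_getLast? hl)
    exact deriv_sound hP i hi q h
  · intro h
    obtain ⟨P', -, h2⟩ := h.derivable [] (fun i => i.elim0)
    exact ⟨_, h2, by simp⟩

theorem kleene_true {Atom : Type} {f : Lit Atom → Option Bool} {S : Finset (Lit Atom)} :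
    kleeneAll f S = some true ↔ ∀ a ∈ S, f a = some true := by
  unfold kleeneAll
  split_ifs with h1 h2
  · obtain ⟨a, ha, h⟩ := h1
    simp only [Option.some.injEq, Bool.false_eq_true, false_iff]
    intro h'
    simp [h' a ha] at h
  · simpa using h2
  · simpa using h2

theorem kleene_false {Atom : Type} {f : Lit Atom → Option Bool} {S : Finset (Lit Atom)} :
    kleeneAll f S = some false ↔ ∃ a ∈ S, f a = some false := by
  unfold kleeneAll
  split_ifs with h1 h2
  · simpa using h1
  · simpa using h1
  · simpa using h1

/-- Conditions for `∂`-truth relative to sets of believed / disbelieved literals. -/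
def ParPlus {Atom : Type} (T : DTheory Atom) (S : Set (Lit Atom × Bool)) (q : Lit Atom) : Prop :=
  DefD T q ∨
    ((∃ r ∈ T.rules, r.isSd ∧ r.head = q ∧ ∀ a ∈ r.body, (a, true) ∈ S) ∧
      ¬ DefD T q.compl ∧
      ∀ s ∈ T.rules, s.head = q.compl →
        ((∃ a ∈ s.body, (a, false) ∈ S) ∨
          ∃ t ∈ T.rules, t.isSd ∧ t.head = q ∧ (∀ a ∈ t.body, (a, true) ∈ S) ∧ T.sup t s))

/-- Conditions for `∂`-falsity. -/
def ParMinus {Atom : Type} (T : DTheory Atom) (S : Set (Lit Atom × Bool)) (q : Lit Atom) : Prop :=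
  ¬ DefD T q ∧
    ((∀ r ∈ T.rules, r.isSd → r.head = q → ∃ a ∈ r.body, (a, false) ∈ S) ∨
      DefD T q.compl ∨
      (∃ s ∈ T.rules, s.head = q.compl ∧ (∀ a ∈ s.body, (a, true) ∈ S) ∧
        ∀ t ∈ T.rules, t.isSd → t.head = q →
          ((∃ a ∈ t.body, (a, false) ∈ S) ∨ ¬ T.sup t s)))

theorem ParPlus.mono {Atom : Type} {T : DTheory Atom} {S S' : Set (Lit Atom × Bool)}
    (h : S ⊆ S') {q : Lit Atom} (hq : ParPlus T S q) : ParPlus T S' q := by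
  rcases hq with hq | ⟨⟨r, hr, h1, h2, h3⟩, h4, h5⟩
  · exact Or.inl hq
  · refine Or.inr ⟨⟨r, hr, h1, h2, fun a ha => h (h3 a ha)⟩, h4, fun s hs hh => ?_⟩
    rcases h5 s hs hh with ⟨a, ha, h6⟩ | ⟨t, ht, h6, h7, h8, h9⟩
    · exact Or.inl ⟨a, ha, h h6⟩
    · exact Or.inr ⟨t, ht, h6, h7, fun a ha => h (h8 a ha), h9⟩

theorem ParMinus.mono {Atom : Type} {T : DTheory Atom} {S S' : Set (Lit Atom × Bool)}
    (h : S ⊆ S') {q : Lit Atom} (hq : ParMinus T S q) : ParMinus T S' q := by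
  refine ⟨hq.1, ?_⟩
  rcases hq.2 with h1 | h1 | ⟨s, hs, h1, h2, h3⟩
  · refine Or.inl fun r hr h2 h3 => ?_
    obtain ⟨a, ha, h4⟩ := h1 r hr h2 h3
    exact ⟨a, ha, h h4⟩
  · exact Or.inr (Or.inl h1)
  · refine Or.inr (Or.inr ⟨s, hs, h1, fun a ha => h (h2 a ha), fun t ht h4 h5 => ?_⟩)
    rcases h3 t ht h4 h5 with ⟨a, ha, h6⟩ | h6
    · exact Or.inl ⟨a, ha, h h6⟩
    · exact Or.inr h6

/-- If no literal is true in `S` and false in `S'`, the two conditions conflict. -/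
theorem par_conflict {Atom : Type} {T : DTheory Atom} {S S' : Set (Lit Atom × Bool)}
    (h : ∀ a, (a, true) ∈ S → (a, false) ∈ S' → False)
    (h' : ∀ a, (a, false) ∈ S → (a, true) ∈ S' → False)
    {q : Lit Atom} (hp : ParPlus T S q) (hm : ParMinus T S' q) : False := by
  obtain ⟨m0, hm⟩ := hm
  rcases hp with hp | ⟨⟨r, hr, h1, h2, h3⟩, h4, h5⟩
  · exact m0 hp
  · rcases hm with hm | hm | ⟨s, hs, k1, k2, k3⟩
    · obtain ⟨a, ha, h6⟩ := hm r hr h1 h2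
      exact h a (h3 a ha) h6
    · exact h4 hm
    · rcases h5 s hs k1 with ⟨a, ha, h6⟩ | ⟨t, ht, h6, h7, h8, h9⟩
      · exact h' a h6 (k2 a ha)
      · rcases k3 t ht h6 h7 with ⟨a, ha, h10⟩ | h10
        · exact h a (h8 a ha) h10
        · exact h10 h9

/-- The monotone operator. -/
def parOp {Atom : Type} (T : DTheory Atom) : Set (Lit Atom × Bool) →o Set (Lit Atom × Bool) where
  toFun S := {x | (x.2 = true ∧ ParPlus T S x.1) ∨ (x.2 = false ∧ ParMinus T S x.1)}
  monotone' := by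
    intro S S' h x hx
    rcases hx with ⟨h1, h2⟩ | ⟨h1, h2⟩
    · exact Or.inl ⟨h1, h2.mono h⟩
    · exact Or.inr ⟨h1, h2.mono h⟩

theorem lfp_true {Atom : Type} (T : DTheory Atom) (q : Lit Atom) :
    (q, true) ∈ (parOp T).lfp ↔ ParPlus T (parOp T).lfp q := by
  conv_lhs => rw [← (parOp T).map_lfp]
  change ((true = true ∧ ParPlus T _ q) ∨ (true = false ∧ ParMinus T _ q)) ↔ _
  simp

theorem lfp_false {Atom : Type} (T : DTheory Atom) (q : Lit Atom) :
    (q, false) ∈ (parOp T).lfp ↔ ParMinus T (parOp T).lfp q := by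
  conv_lhs => rw [← (parOp T).map_lfp]
  change ((false = true ∧ ParPlus T _ q) ∨ (false = false ∧ ParMinus T _ q)) ↔ _
  simp

theorem lfp_consistent {Atom : Type} (T : DTheory Atom) (q : Lit Atom)
    (h1 : (q, true) ∈ (parOp T).lfp) (h2 : (q, false) ∈ (parOp T).lfp) : False := by
  have key : ∀ x ∈ (parOp T).lfp, (x.1, !x.2) ∉ (parOp T).lfp := by
    refine (parOp T).lfp_induction
      (p := fun S => ∀ x ∈ S, (x.1, !x.2) ∉ (parOp T).lfp) ?_ ?_
    · intro S hS _ x hx hx'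
      rcases hx with ⟨hb, hx⟩ | ⟨hb, hx⟩
      · rw [hb] at hx'
        exact par_conflict (fun a k k' => hS _ k k') (fun a k k' => hS _ k k') hx
          ((lfp_false T _).1 hx')
      · rw [hb] at hx'
        exact par_conflict (fun a k k' => hS _ k' k) (fun a k k' => hS _ k' k)
          ((lfp_true T _).1 hx') hx
    · rintro s hs x ⟨S, hS, hx⟩
      exact hs S hS x hx
  exact key _ h1 h2

open Classical in
/-- The canonical model. -/
noncomputable def canon {Atom : Type} (T : DTheory Atom) : DInterp Atom where
  del q := if DefD T q then some true else some false
  par q := if (q, true) ∈ (parOp T).lfp then some true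
    else if (q, false) ∈ (parOp T).lfp then some false else none

theorem canon_del_true {Atom : Type} (T : DTheory Atom) (q : Lit Atom) :
    (canon T).del q = some true ↔ DefD T q := by
  simp [canon]

theorem canon_del_false {Atom : Type} (T : DTheory Atom) (q : Lit Atom) :
    (canon T).del q = some false ↔ ¬ DefD T q := by
  simp [canon]

theorem canon_par_true {Atom : Type} (T : DTheory Atom) (q : Lit Atom) :
    (canon T).par q = some true ↔ (q, true) ∈ (parOp T).lfp := by
  unfold canon
  dsimp only
  split_ifs <;> simp_all

theorem canon_par_false {Atom : Type} (T : DTheory Atom) (q : Lit Atom) :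
    (canon T).par q = some false ↔ (q, false) ∈ (parOp T).lfp := by
  have := lfp_consistent T q
  unfold canon
  dsimp only
  split_ifs <;> simp_all

theorem canon_model {Atom : Type} (T : DTheory Atom) : IsModel T (canon T) := by
  refine ⟨⟨fun q h => ?_, fun q h => ?_⟩, ?_, ?_, ?_, ?_⟩
  · rw [canon_par_true, lfp_true]
    exact Or.inl ((canon_del_true T q).1 h)
  · rw [canon_par_false, lfp_false] at h
    exact (canon_del_false T q).2 h.1
  · intro q
    simp only [kleene_true, canon_del_true]
    constructor
    · rintro (⟨_, h⟩ | ⟨r, h, hk, hb⟩)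
      · exact Or.inl h
      · exact Or.inr ⟨r, h, hk, rfl, hb⟩
    · rintro (h | ⟨r, h, hk, rfl, hb⟩)
      · exact .fact q h
      · exact .rule r h hk hb
  · intro q
    simp only [kleene_false, canon_del_false]
    constructor
    · intro h
      refine ⟨fun hq => h (.fact q hq), fun r hr hk hh => ?_⟩
      by_contra! hc
      subst hh
      exact h (.rule r hr hk hc)
    · rintro ⟨h1, h2⟩ (⟨_, h⟩ | ⟨r, h, hk, hb⟩)
      · exact h1 h
      · obtain ⟨a, ha, h3⟩ := h2 r h hk rfl
        exact h3 (hb a ha)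
  · intro q
    simp only [kleene_true, kleene_false, canon_del_true, canon_del_false, canon_par_true,
      canon_par_false]
    exact lfp_true T q
  · intro q
    simp only [kleene_true, kleene_false, canon_del_true, canon_del_false, canon_par_true,
      canon_par_false]
    exact lfp_false T q

theorem defD_sound {Atom : Type} {T : DTheory Atom} {q : Lit Atom} (h : DefD T q)
    {I : DInterp Atom} (hI : IsModel T I) : I.del q = some true := by
  induction h with
  | fact q h => exact (hI.2.1 q).2 (Or.inl h)
  | rule r h hk hb ih =>
    exact (hI.2.1 _).2 (Or.inr ⟨r, h, hk, rfl, kleene_true.2 ih⟩)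

/-- Characterization of definite provability. -/
theorem DL_plusDelta_char {Atom : Type} [Countable Atom] [DecidableEq Atom]
    (T : DTheory Atom) (hacyc : SupAcyclic T) (q : Lit Atom) :
    DLProves T (Concl.plusDelta q) ↔
      ∀ I : DInterp Atom, IsModel T I → I.del q = some true := by
  rw [proves_iff_defD]
  exact ⟨fun h I hI => defD_sound h hI,
    fun h => (canon_del_true T q).1 (h _ (canon_model T))⟩
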